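/- Let g : ℝ^n → ℝ be a polynomial that is (R,θ)-attenuated, where R ≥ √2 and 0 ≤ θ ≤ 1. Then for x ∼ N(0,1)^n the random variable g(x) is (1 + R²/2, √θ)-hyperconcentrated; i.e., writing μ = E_{x∼N(0,1)^n}[g(x)] and q = 1 + R²/2, we have (E[|g(x) − μ|^q])^{1/q} ≤ √θ·|μ|. -/

import Mathlib

open MeasureTheory ProbabilityTheory MvPolynomial

/-- The standard Gaussian measure `N(0,1)^n` on `ℝ^n`. -/
noncomputable def gaussianN (n : ℕ) : Measure (Fin n → ℝ) :=
  Measure.pi fun _ => gaussianReal 0 1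

/-- The normalized probabilists' Hermite polynomial `h_k = H_k / √(k!)`. -/
noncomputable def hermiteFn (k : ℕ) (t : ℝ) : ℝ :=
  ((Polynomial.hermite k).map (Int.castRingHom ℝ)).eval t / Real.sqrt (Nat.factorial k)

/-- The multivariate Hermite polynomial `h_α(x) = ∏ i, h_{α i}(x i)`. -/
noncomputable def hermiteMv {n : ℕ} (α : Fin n → ℕ) (x : Fin n → ℝ) : ℝ :=
  ∏ i, hermiteFn (α i) (x i)

/-- Hermite coefficient `f̂(α) = E_{x ∼ N(0,1)^n}[f(x)·h_α(x)]` of a function. -/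
noncomputable def hermiteCoeffF {n : ℕ} (f : (Fin n → ℝ) → ℝ) (α : Fin n → ℕ) : ℝ :=
  ∫ x, f x * hermiteMv α x ∂(gaussianN n)

/-- Hermite coefficient `ĝ(α)` of a polynomial. -/
noncomputable def hermiteCoeff {n : ℕ} (g : MvPolynomial (Fin n) ℝ) (α : Fin n → ℕ) : ℝ :=
  hermiteCoeffF (fun x => eval x g) α

/-- The squared Gaussian 2-norm `‖g‖₂² = E_{x ∼ N(0,1)^n}[g(x)²]`. -/
noncomputable def norm2sq {n : ℕ} (g : MvPolynomial (Fin n) ℝ) : ℝ :=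
  ∫ x, (eval x g) ^ 2 ∂(gaussianN n)

/-- The `λ`-zoom of `g` at `x`: `g_{λ|x}(y) = g(√(1-λ)·x + √λ·y)`, as a polynomial in `y`. -/
noncomputable def zoom {n : ℕ} (g : MvPolynomial (Fin n) ℝ) (lam : ℝ) (x : Fin n → ℝ) :
    MvPolynomial (Fin n) ℝ :=
  aeval (fun i => C (Real.sqrt (1 - lam) * x i) + C (Real.sqrt lam) * X i) g

/-- `HyperVar_R[g^{≥m}] = Σ_{|α| ≥ m} R^{2|α|}·ĝ(α)²`. -/
noncomputable def hyperVarGE {n : ℕ} (R : ℝ) (m : ℕ) (g : MvPolynomial (Fin n) ℝ) : ℝ :=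
  ∑' α : Fin n → ℕ, if m ≤ ∑ i, α i then R ^ (2 * ∑ i, α i) * hermiteCoeff g α ^ 2 else 0

/-- `HyperVar_R[g] = Σ_{α ≠ 0} R^{2|α|}·ĝ(α)²`. -/
noncomputable def hyperVar {n : ℕ} (R : ℝ) (g : MvPolynomial (Fin n) ℝ) : ℝ :=
  hyperVarGE R 1 g

/-- A nice distribution of polynomials of degree at most `d` on `ℝ^n`, indexed by
`υ ∈ ℝ^I`: each `g υ` has degree at most `d` and each coefficient of `g υ` is a
polynomial of degree at most `d` in `υ`. -/
def NiceFamily (n I d : ℕ) (g : (Fin I → ℝ) → MvPolynomial (Fin n) ℝ) : Prop :=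
  (∀ υ, (g υ).totalDegree ≤ d) ∧
  ∀ m : Fin n →₀ ℕ, ∃ P : MvPolynomial (Fin I) ℝ,
    P.totalDegree ≤ d ∧ ∀ υ, coeff m (g υ) = eval υ P

/-!
The argument is Gaussian hypercontractivity followed by an elementary comparison of
hypervariances. With `q = 1 + ρ²`, every polynomial satisfies `‖g - μ‖_q² ≤ HyperVar_ρ[g]`.
Take `ρ = R / √2`. Since only degrees `|α| ≥ 1` contribute, `HyperVar_R[g]` is at least twice both
`HyperVar_{R/√2}[g]` and the variance of `g`. Attenuation therefore first gives `‖g‖₂² ≤ 2 μ²`, and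
then `HyperVar_{R/√2}[g] ≤ θ ‖g‖₂² / 2 ≤ θ μ²`.

Hypercontractivity starts from Bonami's two-point inequality for a single sign and tensorizes to
`m` independent signs. The elementary symmetric functions of the signs are polynomials in their
normalized sum which tend to the Hermite polynomials, so the central limit theorem and Fatou's lemma
carry the inequality over to one Gaussian variable, and a second tensorization to `N(0,1)^n`.
-/

/-! ### The two-point inequality -/

lemma two_le_one_add_rpow_add_one_sub_rpow {r x : ℝ} (hr : r ≤ 0) (hx : |x| < 1) :
    2 ≤ (1 + x) ^ r + (1 - x) ^ r := by
  obtain ⟨hx₁, hx₂⟩ := abs_lt.1 hx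
  have hpos : 0 < 1 + x := by linarith
  have hpos' : 0 < 1 - x := by linarith
  have hprod : 1 ≤ (1 + x) ^ r * (1 - x) ^ r := by
    rw [← Real.mul_rpow hpos.le hpos'.le]
    exact Real.one_le_rpow_of_pos_of_le_one_of_nonpos (by positivity)
      (by linarith [sq_nonneg x]) hr
  nlinarith [sq_nonneg ((1 + x) ^ r - (1 - x) ^ r), Real.rpow_pos_of_pos hpos r,
    Real.rpow_pos_of_pos hpos' r]

lemma two_mul_mul_le_one_add_rpow_sub_one_sub_rpow {s x : ℝ} (hs₀ : 0 ≤ s) (hs₁ : s ≤ 1)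
    (hx₀ : 0 ≤ x) (hx₁ : x ≤ 1) : 2 * s * x ≤ (1 + x) ^ s - (1 - x) ^ s := by
  let f : ℝ → ℝ := fun y ↦ (1 + y) ^ s - (1 - y) ^ s - 2 * s * y
  have hderiv : ∀ y ∈ interior (Set.Icc (0 : ℝ) 1), HasDerivAt f
      (1 * s * (1 + y) ^ (s - 1) - (-1) * s * (1 - y) ^ (s - 1) - 2 * s * 1) y := by
    intro y hy
    rw [interior_Icc] at hy
    exact ((((hasDerivAt_id y).const_add 1).rpow_const (.inl (by simp; linarith [hy.1]))).sub
      (((hasDerivAt_id y).const_sub 1).rpow_const (.inl (by simp; linarith [hy.2])))).sub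
      ((hasDerivAt_id y).const_mul _)
  have hmono : MonotoneOn f (Set.Icc 0 1) := by
    refine monotoneOn_of_deriv_nonneg (convex_Icc 0 1) ?_
      (fun y hy ↦ (hderiv y hy).differentiableAt.differentiableWithinAt) fun y hy ↦ ?_
    · exact (((by fun_prop : Continuous fun y : ℝ ↦ 1 + y).rpow_const fun _ ↦ .inr hs₀).sub
        ((by fun_prop : Continuous fun y : ℝ ↦ 1 - y).rpow_const fun _ ↦ .inr hs₀)).sub
        (by fun_prop) |>.continuousOn
    · rw [(hderiv y hy).deriv]
      rw [interior_Icc] at hy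
      nlinarith [two_le_one_add_rpow_add_one_sub_rpow (r := s - 1) (x := y) (by linarith)
        (abs_lt.2 ⟨by linarith [hy.1], hy.2⟩)]
  have hle : f 0 ≤ f x := hmono (Set.left_mem_Icc.2 zero_le_one) ⟨hx₀, hx₁⟩ hx₀
  simp only [f, add_zero, sub_zero, Real.one_rpow, mul_zero, sub_self] at hle
  linarith

lemma one_add_mul_sq_le_one_add_rpow_add_one_sub_rpow {p x : ℝ} (hp₁ : 1 ≤ p) (hp₂ : p ≤ 2)
    (hx₀ : 0 ≤ x) (hx₁ : x ≤ 1) :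
    1 + p * (p - 1) / 2 * x ^ 2 ≤ ((1 + x) ^ p + (1 - x) ^ p) / 2 := by
  let f : ℝ → ℝ := fun y ↦ (1 + y) ^ p + (1 - y) ^ p - p * (p - 1) * y ^ 2
  have hderiv (y : ℝ) : HasDerivAt f
      (1 * p * (1 + y) ^ (p - 1) + (-1) * p * (1 - y) ^ (p - 1) - p * (p - 1) * (2 * y)) y := by
    refine ((((hasDerivAt_id y).const_add 1).rpow_const (.inr hp₁)).add
      (((hasDerivAt_id y).const_sub 1).rpow_const (.inr hp₁))).sub ?_
    simpa using (hasDerivAt_pow 2 y).const_mul (p * (p - 1))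
  have hmono : MonotoneOn f (Set.Icc 0 1) := by
    refine monotoneOn_of_deriv_nonneg (convex_Icc 0 1)
      (fun y _ ↦ (hderiv y).continuousAt.continuousWithinAt)
      (fun y _ ↦ (hderiv y).differentiableAt.differentiableWithinAt) fun y hy ↦ ?_
    rw [(hderiv y).deriv]
    rw [interior_Icc] at hy
    nlinarith [two_mul_mul_le_one_add_rpow_sub_one_sub_rpow (s := p - 1) (by linarith)
      (by linarith) hy.1.le hy.2.le]
  have hle : f 0 ≤ f x := hmono (Set.left_mem_Icc.2 zero_le_one) ⟨hx₀, hx₁⟩ hx₀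
  simp only [f, add_zero, sub_zero, Real.one_rpow, ne_eq, OfNat.ofNat_ne_zero, not_false_eq_true,
    zero_pow, mul_zero] at hle
  linarith

lemma sq_add_mul_sq_rpow_le_of_le {p a b : ℝ} (hp₁ : 1 ≤ p) (hp₂ : p ≤ 2) (hb : 0 ≤ b)
    (hba : b ≤ a) :
    (a ^ 2 + (p - 1) * b ^ 2) ^ (p / 2) ≤ ((a + b) ^ p + (a - b) ^ p) / 2 := by
  rcases (hb.trans hba).eq_or_lt with rfl | ha
  · obtain rfl : b = 0 := le_antisymm hba hb
    simp [Real.zero_rpow (by linarith : p ≠ 0), Real.zero_rpow (by linarith : p / 2 ≠ 0)]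
  obtain ⟨t, rfl⟩ : ∃ t, b = a * t := ⟨b / a, by field_simp⟩
  have ht₀ : 0 ≤ t := nonneg_of_mul_nonneg_right hb ha
  have ht₁ : t ≤ 1 := by nlinarith
  have hnonneg : 0 ≤ (p - 1) * t ^ 2 := mul_nonneg (by linarith) (sq_nonneg t)
  have hbernoulli : (1 + (p - 1) * t ^ 2) ^ (p / 2) ≤ 1 + p / 2 * ((p - 1) * t ^ 2) :=
    rpow_one_add_le_one_add_mul_self (by linarith) (by linarith) (by linarith)
  calc (a ^ 2 + (p - 1) * (a * t) ^ 2) ^ (p / 2)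
      = (a ^ 2 * (1 + (p - 1) * t ^ 2)) ^ (p / 2) := by ring_nf
    _ = a ^ p * (1 + (p - 1) * t ^ 2) ^ (p / 2) := by
        rw [Real.mul_rpow (sq_nonneg a) (by linarith), ← Real.rpow_natCast_mul ha.le]
        ring_nf
    _ ≤ a ^ p * (((1 + t) ^ p + (1 - t) ^ p) / 2) := by
        gcongr
        linarith [one_add_mul_sq_le_one_add_rpow_add_one_sub_rpow hp₁ hp₂ ht₀ ht₁]
    _ = ((a + a * t) ^ p + (a - a * t) ^ p) / 2 := by
        rw [show a + a * t = a * (1 + t) by ring, show a - a * t = a * (1 - t) by ring,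
          Real.mul_rpow ha.le (by linarith), Real.mul_rpow ha.le (by linarith)]
        ring

lemma abs_add_rpow_add_abs_sub_rpow (p a b : ℝ) :
    |a + b| ^ p + |a - b| ^ p = (|a| + |b|) ^ p + |(|a| - |b|)| ^ p := by
  rw [← abs_of_nonneg (by positivity : 0 ≤ |a| + |b|)]
  rcases abs_choice a with ha | ha <;> rcases abs_choice b with hb | hb <;> rw [ha, hb]
  · rw [add_comm, sub_eq_add_neg, sub_neg_eq_add]
  · rw [add_comm, ← abs_neg (a - b), ← abs_neg (a + b)]
    ring_nf
  · rw [← abs_neg (a - b), ← abs_neg (a + b)]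
    ring_nf

lemma sq_add_mul_sq_rpow_le {p : ℝ} (hp₁ : 1 ≤ p) (hp₂ : p ≤ 2) (a b : ℝ) :
    (a ^ 2 + (p - 1) * b ^ 2) ^ (p / 2) ≤ (|a + b| ^ p + |a - b| ^ p) / 2 := by
  rw [abs_add_rpow_add_abs_sub_rpow, ← sq_abs a, ← sq_abs b]
  rcases le_total |b| |a| with h | h
  · rw [abs_of_nonneg (sub_nonneg.2 h)]
    exact sq_add_mul_sq_rpow_le_of_le hp₁ hp₂ (abs_nonneg b) h
  · rw [abs_sub_comm, abs_of_nonneg (sub_nonneg.2 h), add_comm |a|]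
    refine le_trans ?_ (sq_add_mul_sq_rpow_le_of_le hp₁ hp₂ (abs_nonneg a) h)
    have hsq : |a| ^ 2 ≤ |b| ^ 2 := by gcongr
    have hnonneg : 0 ≤ (p - 1) * |b| ^ 2 := mul_nonneg (by linarith) (sq_nonneg _)
    exact Real.rpow_le_rpow (add_nonneg (sq_nonneg _) hnonneg) (by nlinarith) (by linarith)

lemma abs_rpow_sub_two_mul_self_rpow {p q : ℝ} (hpq : p.HolderConjugate q) (u : ℝ) :
    |(|u| ^ (q - 2) * u)| ^ p = |u| ^ q := by
  rcases eq_or_ne u 0 with rfl | hu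
  · simp [hpq.ne_zero, hpq.symm.ne_zero]
  · rw [abs_mul, abs_of_nonneg (by positivity : 0 ≤ |u| ^ (q - 2)),
      ← Real.rpow_add_one (abs_ne_zero.2 hu), ← Real.rpow_mul (abs_nonneg u)]
    congr 1
    linarith [hpq.mul_eq_add]

lemma self_mul_abs_rpow_sub_two_mul_self {q : ℝ} (hq : q ≠ 0) (u : ℝ) :
    u * (|u| ^ (q - 2) * u) = |u| ^ q := by
  rcases eq_or_ne u 0 with rfl | hu
  · simp [hq]
  · rw [mul_left_comm, ← sq, ← sq_abs, ← Real.rpow_add_natCast (abs_ne_zero.2 hu)]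
    congr 1
    push_cast
    ring

lemma le_rpow_half_of_sq_le_mul {p q M S T : ℝ} (hpq : p.HolderConjugate q) (hM : 0 ≤ M)
    (hS : 0 ≤ S) (hT : 0 ≤ T) (hMTS : M ^ 2 ≤ T * S) (hSM : S ^ (p / 2) ≤ M) :
    M ≤ T ^ (q / 2) := by
  rcases hM.eq_or_lt with rfl | hM
  · positivity
  have hp := hpq.pos
  have hq := hpq.symm.pos
  have hSq : S ^ (q / 2) ≤ M ^ (q - 1) :=
    calc S ^ (q / 2) = (S ^ (p / 2)) ^ (q / p) := by
          rw [← Real.rpow_mul hS]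
          field_simp
      _ ≤ M ^ (q / p) := by gcongr
      _ = M ^ (q - 1) := by rw [hpq.symm.div_conj_eq_sub_one]
  refine le_of_mul_le_mul_right ?_ (Real.rpow_pos_of_pos hM (q - 1))
  calc M * M ^ (q - 1) = (M ^ 2) ^ (q / 2) := by
        rw [mul_comm, ← Real.rpow_add_one hM.ne', ← Real.rpow_natCast_mul hM.le]
        ring_nf
    _ ≤ T ^ (q / 2) * S ^ (q / 2) := by
        rw [← Real.mul_rpow hT hS]
        gcongr
    _ ≤ T ^ (q / 2) * M ^ (q - 1) := by gcongr

-- Test `(a + b, a - b)` against its dual vector `(U, V)` and bound the latter by the case `p ≤ 2`.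
lemma abs_add_rpow_add_abs_sub_rpow_le {q : ℝ} (hq : 2 ≤ q) (a b : ℝ) :
    (|a + b| ^ q + |a - b| ^ q) / 2 ≤ (a ^ 2 + (q - 1) * b ^ 2) ^ (q / 2) := by
  have hq₁ : 0 < q - 1 := by linarith
  set p := q.conjExponent with hp
  have hpq : p.HolderConjugate q := (Real.HolderConjugate.conjExponent (by linarith)).symm
  have hp₁ : p - 1 = 1 / (q - 1) := by rw [hp, Real.conjExponent]; field_simp; ring
  have hp₁' : p - 1 ≤ 1 := by rw [hp₁, div_le_one hq₁]; linarith
  set U := |a + b| ^ (q - 2) * (a + b) with hU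
  set V := |a - b| ^ (q - 2) * (a - b) with hV
  have hdual := sq_add_mul_sq_rpow_le hpq.lt.le (by linarith) ((U + V) / 2) ((U - V) / 2)
  rw [show (U + V) / 2 + (U - V) / 2 = U by ring, show (U + V) / 2 - (U - V) / 2 = V by ring,
    abs_rpow_sub_two_mul_self_rpow hpq, abs_rpow_sub_two_mul_self_rpow hpq] at hdual
  refine le_rpow_half_of_sq_le_mul hpq (by positivity) (by rw [hp₁]; positivity) (by positivity)
    ?_ hdual
  have hpair : (|a + b| ^ q + |a - b| ^ q) / 2 = a * ((U + V) / 2) + b * ((U - V) / 2) := by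
    rw [← self_mul_abs_rpow_sub_two_mul_self (by linarith) (a + b),
      ← self_mul_abs_rpow_sub_two_mul_self (by linarith) (a - b), ← hU, ← hV]
    ring
  rw [hpair, hp₁]
  suffices hsq : 0 ≤ (a * ((U - V) / 2) - (q - 1) * b * ((U + V) / 2)) ^ 2 / (q - 1) by
    rw [← sub_nonneg]
    convert hsq using 1
    field_simp
    ring
  positivity

/-! ### Hypercontractive systems and their tensor products -/

section IsHypercontractiveSystem

variable {Ω Ω' ι κ : Type*} [MeasurableSpace Ω] [MeasurableSpace Ω'] {ν : Measure Ω}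
  {ν' : Measure Ω'} {q : ℝ} {w : ι → ENNReal} {w' : κ → ENNReal} {e : ι → Ω → ℝ}
  {e' : κ → Ω' → ℝ}

lemma lintegral_finsetSum_rpow_le {r : ℝ} (hr : 1 ≤ r) {f : ι → Ω → ENNReal} {a : ι → ENNReal}
    (s : Finset ι) (hf : ∀ i, AEMeasurable (f i) ν) (h : ∀ i, ∫⁻ x, f i x ^ r ∂ν ≤ a i ^ r) :
    ∫⁻ x, (∑ i ∈ s, f i x) ^ r ∂ν ≤ (∑ i ∈ s, a i) ^ r := by
  have hr₀ : 0 < r := by linarith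
  induction s using Finset.cons_induction with
  | empty => simp [hr₀]
  | cons j s hj ih =>
    simp only [Finset.sum_cons]
    rw [← ENNReal.rpow_inv_le_iff hr₀, ← one_div] at ih ⊢
    have hfj := h j
    rw [← ENNReal.rpow_inv_le_iff hr₀, ← one_div] at hfj
    exact (ENNReal.lintegral_Lp_add_le (hf j) (Finset.aemeasurable_fun_sum s fun i _ ↦ hf i)
      hr).trans (add_le_add hfj ih)

lemma pow_two_rpow_half (a : ENNReal) (q : ℝ) : (a ^ 2) ^ (q / 2) = a ^ q := by
  rw [← ENNReal.rpow_natCast_mul]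
  congr 1
  push_cast
  ring

/-- The functions `e i` span a hypercontractive system with weights `w i`: every finite linear
combination satisfies `‖∑ i, c i * e i‖_q ^ 2 ≤ ∑ i, w i * c i ^ 2`, where `‖·‖_q` is the norm of
`L^q(ν)`. Both sides are raised to the power `q / 2` and take values in `[0, ∞]`, so that the
inequality carries no integrability assumption. -/
def IsHypercontractiveSystem (ν : Measure Ω) (q : ℝ) (w : ι → ENNReal) (e : ι → Ω → ℝ) : Prop :=
  ∀ (s : Finset ι) (c : ι → ℝ),
    ∫⁻ x, ‖∑ i ∈ s, c i * e i x‖ₑ ^ q ∂ν ≤ (∑ i ∈ s, w i * ‖c i‖ₑ ^ 2) ^ (q / 2)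

namespace IsHypercontractiveSystem

lemma of_univ [Fintype ι]
    (h : ∀ c : ι → ℝ, ∫⁻ x, ‖∑ i, c i * e i x‖ₑ ^ q ∂ν ≤ (∑ i, w i * ‖c i‖ₑ ^ 2) ^ (q / 2)) :
    IsHypercontractiveSystem ν q w e := by
  classical
  intro s c
  simpa [ite_mul, apply_ite] using h fun i ↦ if i ∈ s then c i else 0

lemma mono (hq : 0 ≤ q) {w' : ι → ENNReal} (hw : ∀ i, w i ≤ w' i)
    (h : IsHypercontractiveSystem ν q w e) : IsHypercontractiveSystem ν q w' e := fun s c ↦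
  (h s c).trans <| by gcongr with i; exact hw i

lemma congr_ae {f : ι → Ω → ℝ} (hef : ∀ i, e i =ᵐ[ν] f i)
    (h : IsHypercontractiveSystem ν q w e) : IsHypercontractiveSystem ν q w f := by
  intro s c
  refine (lintegral_congr_ae ?_).trans_le (h s c)
  have hae : ∀ᵐ x ∂ν, ∀ i ∈ s, e i x = f i x := (Finset.eventually_all s).2 fun i _ ↦ hef i
  filter_upwards [hae] with x hx
  rw [Finset.sum_congr rfl fun i hi ↦ congrArg (c i * ·) (hx i hi)]

lemma const_mul (r : ι → ℝ) (h : IsHypercontractiveSystem ν q w e) :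
    IsHypercontractiveSystem ν q (fun i ↦ ‖r i‖ₑ ^ 2 * w i) fun i x ↦ r i * e i x := by
  intro s c
  simpa only [enorm_mul, mul_pow, mul_assoc, mul_left_comm, mul_comm] using h s fun i ↦ c i * r i

lemma comp_measurePreserving {φ : Ω' → Ω} (hφ : MeasurePreserving φ ν' ν)
    (he : ∀ i, Measurable (e i)) (h : IsHypercontractiveSystem ν q w e) :
    IsHypercontractiveSystem ν' q w fun i x ↦ e i (φ x) := by
  intro s c
  rw [hφ.lintegral_comp (f := fun x ↦ ‖∑ i ∈ s, c i * e i x‖ₑ ^ q) (by fun_prop)]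
  exact h s c

lemma comp_injective {f : κ → ι} (hf : f.Injective) (h : IsHypercontractiveSystem ν q w e) :
    IsHypercontractiveSystem ν q (fun k ↦ w (f k)) fun k ↦ e (f k) := by
  intro s c
  simpa [hf.extend_apply] using h (s.map ⟨f, hf⟩) (Function.extend f c 0)

lemma sum_fiber [Fintype ι] [DecidableEq κ] (π : ι → κ) (h : IsHypercontractiveSystem ν q w e) :
    IsHypercontractiveSystem ν q (fun k ↦ ∑ i with π i = k, w i)
      fun k x ↦ ∑ i with π i = k, e i x := by
  intro s c
  have hfiber {M : Type} [AddCommMonoid M] (f : κ → ι → M) :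
      ∑ k ∈ s, ∑ i with π i = k, f k i = ∑ i with π i ∈ s, f (π i) i := by
    rw [← Finset.sum_fiberwise_eq_sum_filter]
    exact Finset.sum_congr rfl fun k _ ↦ Finset.sum_congr rfl fun i hi ↦ by
      rw [(Finset.mem_filter.1 hi).2]
  simpa only [Finset.mul_sum, Finset.sum_mul, hfiber] using h {i | π i ∈ s} fun i ↦ c (π i)

lemma prod [SFinite ν] [SFinite ν'] (hq : 2 ≤ q) (he : ∀ i, Measurable (e i))
    (he' : ∀ k, Measurable (e' k)) (h : IsHypercontractiveSystem ν q w e)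
    (h' : IsHypercontractiveSystem ν' q w' e') :
    IsHypercontractiveSystem (ν.prod ν') q (fun j : ι × κ ↦ w j.1 * w' j.2)
      fun j z ↦ e j.1 z.1 * e' j.2 z.2 := by
  classical
  intro s c
  let fiber (k : κ) : Finset ι := {j ∈ s | j.2 = k}.image Prod.fst
  have hs : ∀ j : ι × κ, j ∈ s ↔ j.2 ∈ s.image Prod.snd ∧ j.1 ∈ fiber j.2 := by
    simp only [fiber, Finset.mem_image, Finset.mem_filter]
    aesop
  have hsum {M : Type} [AddCommMonoid M] (f : ι × κ → M) :
      ∑ j ∈ s, f j = ∑ k ∈ s.image Prod.snd, ∑ i ∈ fiber k, f (i, k) :=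
    Finset.sum_finset_product_right s _ fiber hs
  calc ∫⁻ z, ‖∑ j ∈ s, c j * (e j.1 z.1 * e' j.2 z.2)‖ₑ ^ q ∂ν.prod ν'
      = ∫⁻ x, ∫⁻ y, ‖∑ k ∈ s.image Prod.snd, (∑ i ∈ fiber k, c (i, k) * e i x) * e' k y‖ₑ ^ q
          ∂ν' ∂ν := by
        rw [lintegral_prod _ (by fun_prop)]
        simp only [hsum, Finset.sum_mul, mul_assoc]
    _ ≤ ∫⁻ x, (∑ k ∈ s.image Prod.snd, w' k * ‖∑ i ∈ fiber k, c (i, k) * e i x‖ₑ ^ 2) ^ (q / 2)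
          ∂ν := lintegral_mono fun x ↦ h' _ _
    _ ≤ (∑ k ∈ s.image Prod.snd, w' k * ∑ i ∈ fiber k, w i * ‖c (i, k)‖ₑ ^ 2) ^ (q / 2) := by
        refine lintegral_finsetSum_rpow_le (by linarith) _
          (fun k ↦ (by fun_prop : Measurable _).aemeasurable) fun k ↦ ?_
        simp only [ENNReal.mul_rpow_of_nonneg _ _ (by linarith : 0 ≤ q / 2), pow_two_rpow_half]
        rw [lintegral_const_mul _ (by fun_prop)]
        gcongr
        exact h _ _
    _ = (∑ j ∈ s, w j.1 * w' j.2 * ‖c j‖ₑ ^ 2) ^ (q / 2) := by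
        rw [hsum]
        simp only [Finset.mul_sum, mul_assoc, mul_left_comm]

end IsHypercontractiveSystem

end IsHypercontractiveSystem

section Pi

universe u v

variable {q : ℝ}

lemma IsHypercontractiveSystem.pi {n : ℕ} {Ω : Fin n → Type u} {ι : Fin n → Type v}
    [∀ i, MeasurableSpace (Ω i)] {ν : ∀ i, Measure (Ω i)} [∀ i, IsProbabilityMeasure (ν i)]
    (hq : 2 ≤ q) {w : ∀ i, ι i → ENNReal} {e : ∀ i, ι i → Ω i → ℝ}
    (he : ∀ i k, Measurable (e i k)) (h : ∀ i, IsHypercontractiveSystem (ν i) q (w i) (e i)) :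
    IsHypercontractiveSystem (Measure.pi ν) q (fun α : ∀ i, ι i ↦ ∏ i, w i (α i))
      fun α x ↦ ∏ i, e i (α i) (x i) := by
  induction n with
  | zero =>
    refine .of_univ fun c ↦ ?_
    simp [pow_two_rpow_half]
  | succ n ih =>
    have hprod := (h 0).prod hq (he 0) (fun α ↦ by fun_prop)
      (ih (fun i k ↦ he i.succ k) fun i ↦ h i.succ)
    have hcons := (hprod.comp_measurePreserving (measurePreserving_piFinSuccAbove ν 0)
      (fun j ↦ by fun_prop)).comp_injective (Fin.consEquiv ι).symm.injective
    simp only [Fin.prod_univ_succ]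
    exact hcons

end Pi

/-! ### Elementary symmetric functions of random signs -/

section Esymm

variable {σ S : Type*} [Fintype σ] [CommRing S] (x : σ → S)

lemma eval_esymm (k : ℕ) :
    eval x (esymm σ S k) = ∑ t : Finset σ with t.card = k, ∏ i ∈ t, x i := by
  rw [esymm, Finset.univ_filter_card_eq]
  simp only [map_sum, map_prod, eval_X]

/-- The generating polynomial `∏ i, (1 + x i * X)` of the elementary symmetric functions of `x`;
differential equations for it become recurrences between these functions. -/
noncomputable def esymmGenPoly : Polynomial S :=
  ∏ i, (1 + Polynomial.C (x i) * Polynomial.X)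

lemma coeff_esymmGenPoly (k : ℕ) : (esymmGenPoly x).coeff k = eval x (esymm σ S k) := by
  simp only [esymmGenPoly, Finset.prod_one_add, Finset.prod_mul_distrib, Finset.prod_const,
    ← map_prod, Polynomial.finsetSum_coeff, Polynomial.coeff_C_mul_X_pow, eval_esymm,
    Finset.sum_filter, Finset.powerset_univ, eq_comm]

lemma one_sub_X_sq_mul_derivative_esymmGenPoly (hx : ∀ i, x i ^ 2 = 1) :
    (1 - Polynomial.X ^ 2) * Polynomial.derivative (esymmGenPoly x) =
      (Polynomial.C (∑ i, x i) - Polynomial.C (Fintype.card σ : S) * Polynomial.X) *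
        esymmGenPoly x := by
  classical
  have hfactor (i : σ) : (1 - Polynomial.X ^ 2 : Polynomial S) * Polynomial.C (x i) =
      (1 + Polynomial.C (x i) * Polynomial.X) * (Polynomial.C (x i) - Polynomial.X) := by
    have hC : Polynomial.C (x i) ^ 2 = 1 := by rw [← map_pow, hx, map_one]
    linear_combination -(Polynomial.X : Polynomial S) * hC
  calc (1 - Polynomial.X ^ 2) * Polynomial.derivative (esymmGenPoly x)
      = ∑ i, ((1 - Polynomial.X ^ 2) * Polynomial.C (x i)) *
          ∏ j ∈ Finset.univ.erase i, (1 + Polynomial.C (x j) * Polynomial.X) := by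
        simp only [esymmGenPoly, Polynomial.derivative_prod_finset, Polynomial.derivative_add,
          Polynomial.derivative_one, zero_add, Polynomial.derivative_C_mul,
          Polynomial.derivative_X, mul_one, Finset.mul_sum]
        exact Finset.sum_congr rfl fun i _ ↦ by ring
    _ = ∑ i, (Polynomial.C (x i) - Polynomial.X) * esymmGenPoly x := by
        refine Finset.sum_congr rfl fun i hi ↦ ?_
        rw [esymmGenPoly, ← Finset.mul_prod_erase _ _ hi, hfactor]
        ring
    _ = _ := by
        simp only [← Finset.sum_mul, Finset.sum_sub_distrib, map_sum, Finset.sum_const,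
          Finset.card_univ, nsmul_eq_mul, map_natCast]

lemma sum_mul_eval_esymm_succ (hx : ∀ i, x i ^ 2 = 1) (k : ℕ) :
    (∑ i, x i) * eval x (esymm σ S (k + 1)) =
      (k + 2) * eval x (esymm σ S (k + 2)) + (Fintype.card σ - k) * eval x (esymm σ S k) := by
  have hcoeff := congrArg (Polynomial.coeff · (k + 1))
    (one_sub_X_sq_mul_derivative_esymmGenPoly x hx)
  have hX : (Polynomial.X * (Polynomial.X * Polynomial.derivative (esymmGenPoly x))).coeff (k + 1)
      = k * eval x (esymm σ S k) := by
    rw [Polynomial.coeff_X_mul]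
    cases k with
    | zero => simp
    | succ k =>
      rw [Polynomial.coeff_X_mul, Polynomial.coeff_derivative, coeff_esymmGenPoly]
      push_cast
      ring
  simp only [sub_mul, one_mul, pow_two, mul_assoc, Polynomial.coeff_sub, hX,
    Polynomial.coeff_derivative, Polynomial.coeff_C_mul, Polynomial.coeff_X_mul,
    coeff_esymmGenPoly] at hcoeff
  push_cast at hcoeff
  linear_combination -hcoeff

end Esymm

/-- The law of a uniformly random sign. -/
noncomputable def rademacher : Measure ℝ :=
  (2 : ENNReal)⁻¹ • Measure.dirac 1 + (2 : ENNReal)⁻¹ • Measure.dirac (-1)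

instance : IsProbabilityMeasure rademacher :=
  ⟨by simp [rademacher, ENNReal.inv_two_add_inv_two]⟩

lemma lintegral_rademacher (f : ℝ → ENNReal) :
    ∫⁻ x, f x ∂rademacher = 2⁻¹ * f 1 + 2⁻¹ * f (-1) := by
  simp [rademacher]

lemma integral_rademacher (f : ℝ → ℝ) : ∫ x, f x ∂rademacher = (f 1 + f (-1)) / 2 := by
  rw [rademacher, integral_add_measure, integral_smul_measure, integral_smul_measure]
  · simp
    ring
  all_goals exact (integrable_dirac (by simp)).smul_measure (by simp)

lemma ae_rademacher_sq_eq_one : ∀ᵐ x ∂rademacher, x ^ 2 = 1 := by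
  rw [rademacher, ae_add_measure_iff]
  constructor <;> refine Measure.ae_smul_measure ?_ _ <;> simp [ae_dirac_eq]

lemma isHypercontractiveSystem_rademacher {q : ℝ} (hq : 2 ≤ q) :
    IsHypercontractiveSystem rademacher q
      (fun j : Fin 2 ↦ ENNReal.ofReal (q - 1) ^ (j : ℕ)) fun j x ↦ x ^ (j : ℕ) := by
  refine .of_univ fun c ↦ ?_
  have hhalf : ENNReal.ofReal 2⁻¹ = 2⁻¹ := by
    rw [ENNReal.ofReal_inv_of_pos two_pos, ENNReal.ofReal_ofNat]
  have hreal (a : ℝ) : ‖a‖ₑ ^ q = ENNReal.ofReal (|a| ^ q) := by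
    rw [Real.enorm_eq_ofReal_abs, ENNReal.ofReal_rpow_of_nonneg (abs_nonneg a) (by linarith)]
  calc ∫⁻ x, ‖∑ j, c j * x ^ (j : ℕ)‖ₑ ^ q ∂rademacher
      = ENNReal.ofReal ((|c 0 + c 1| ^ q + |c 0 - c 1| ^ q) / 2) := by
        rw [lintegral_rademacher, hreal, hreal, ← hhalf, ← ENNReal.ofReal_mul (by positivity),
          ← ENNReal.ofReal_mul (by positivity), ← ENNReal.ofReal_add (by positivity)
          (by positivity)]
        simp only [Fin.sum_univ_two, Fin.val_zero, Fin.val_one, pow_zero, pow_one, mul_one,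
          mul_neg, ← sub_eq_add_neg]
        ring_nf
    _ ≤ ENNReal.ofReal ((c 0 ^ 2 + (q - 1) * c 1 ^ 2) ^ (q / 2)) :=
        ENNReal.ofReal_le_ofReal (abs_add_rpow_add_abs_sub_rpow_le hq (c 0) (c 1))
    _ = (∑ j : Fin 2, ENNReal.ofReal (q - 1) ^ (j : ℕ) * ‖c j‖ₑ ^ 2) ^ (q / 2) := by
        have hsq (a : ℝ) : ‖a‖ₑ ^ 2 = ENNReal.ofReal (a ^ 2) := by
          rw [← enorm_pow, Real.enorm_of_nonneg (sq_nonneg a)]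
        have hq₁ : 0 ≤ q - 1 := by linarith
        rw [← ENNReal.ofReal_rpow_of_nonneg (by positivity) (by linarith),
          ENNReal.ofReal_add (by positivity) (by positivity), ENNReal.ofReal_mul hq₁]
        simp [Fin.sum_univ_two, hsq]

lemma isHypercontractiveSystem_prod_sign {q : ℝ} (hq : 2 ≤ q) (m : ℕ) :
    IsHypercontractiveSystem (Measure.pi fun _ : Fin m ↦ rademacher) q
      (fun t : Finset (Fin m) ↦ ENNReal.ofReal (q - 1) ^ t.card) fun t x ↦ ∏ i ∈ t, x i := by
  have hpi := IsHypercontractiveSystem.pi hq (fun _ : Fin m ↦ fun _ ↦ by fun_prop)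
    fun _ : Fin m ↦ isHypercontractiveSystem_rademacher hq
  let indicator (t : Finset (Fin m)) (i : Fin m) : Fin 2 := if i ∈ t then 1 else 0
  have hinj : indicator.Injective := fun t u htu ↦ by
    ext i
    have hi := congrFun htu i
    by_cases ht : i ∈ t <;> by_cases hu : i ∈ u <;> simp_all [indicator]
  have hprod {M : Type} [CommMonoid M] (t : Finset (Fin m)) (f : Fin m → M) :
      ∏ i, f i ^ (indicator t i : ℕ) = ∏ i ∈ t, f i := by
    simp [indicator, apply_ite]
  simpa only [hprod, Finset.prod_const] using hpi.comp_injective hinj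

lemma isHypercontractiveSystem_eval_esymm {q : ℝ} (hq : 2 ≤ q) (m : ℕ) :
    IsHypercontractiveSystem (Measure.pi fun _ : Fin m ↦ rademacher) q
      (fun k ↦ m.choose k * ENNReal.ofReal (q - 1) ^ k) fun k x ↦ eval x (esymm (Fin m) ℝ k) := by
  convert (isHypercontractiveSystem_prod_sign hq m).sum_fiber Finset.card using 2 with k k
  · rw [Finset.sum_congr rfl fun t ht ↦ by rw [(Finset.mem_filter.1 ht).2],
      Finset.sum_const, Finset.univ_filter_card_eq, Finset.card_powersetCard, nsmul_eq_mul,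
      Finset.card_univ, Fintype.card_fin]
  · exact funext fun x ↦ eval_esymm x k

/-! ### Hermite polynomials as limits of elementary symmetric functions -/

lemma derivative_hermite_succ (k : ℕ) :
    Polynomial.derivative (Polynomial.hermite (k + 1)) =
      (k + 1 : Polynomial ℤ) * Polynomial.hermite k := by
  induction k with
  | zero => simp [Polynomial.hermite_succ]
  | succ k ih =>
    rw [Polynomial.hermite_succ (k + 1), Polynomial.derivative_sub, Polynomial.derivative_mul, ih,
      Polynomial.derivative_mul, Polynomial.hermite_succ k]
    simp
    ring

/-- The probabilists' Hermite polynomial `H_k` over `ℝ`; `hermiteFn k` is `H_k / √(k!)`. -/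
noncomputable def realHermite (k : ℕ) : Polynomial ℝ :=
  (Polynomial.hermite k).map (Int.castRingHom ℝ)

lemma realHermite_zero : realHermite 0 = 1 := by simp [realHermite]

lemma realHermite_one : realHermite 1 = Polynomial.X := by simp [realHermite]

lemma realHermite_succ (k : ℕ) :
    realHermite (k + 1) =
      Polynomial.X * realHermite k - Polynomial.derivative (realHermite k) := by
  simp [realHermite, Polynomial.hermite_succ, Polynomial.derivative_map]

lemma derivative_realHermite_succ (k : ℕ) :
    Polynomial.derivative (realHermite (k + 1)) = (k + 1 : Polynomial ℝ) * realHermite k := by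
  rw [realHermite, Polynomial.derivative_map, derivative_hermite_succ]
  simp [realHermite]

lemma realHermite_succ_succ (k : ℕ) :
    realHermite (k + 2) =
      Polynomial.X * realHermite (k + 1) - (k + 1 : Polynomial ℝ) * realHermite k := by
  rw [realHermite_succ, derivative_realHermite_succ]

lemma hermiteFn_eq (k : ℕ) (t : ℝ) :
    hermiteFn k t = (realHermite k).eval t / √(k.factorial) := rfl

@[fun_prop]
lemma measurable_hermiteFn (k : ℕ) : Measurable (hermiteFn k) :=
  (Polynomial.continuous _).measurable.div_const _

/-- The Krawtchouk polynomials, scaled to have leading coefficient `1` and a continuous parameter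
`s`. For `s = 1 / m` they express the elementary symmetric functions of `m` signs through their
normalized sum; for `s = 0` they are the Hermite polynomials. -/
def scaledKrawtchouk (s x : ℝ) : ℕ → ℝ
  | 0 => 1
  | 1 => x
  | k + 2 => x * scaledKrawtchouk s x (k + 1) - (k + 1) * (1 - k * s) * scaledKrawtchouk s x k

@[fun_prop]
lemma continuous_scaledKrawtchouk (k : ℕ) :
    Continuous fun z : ℝ × ℝ ↦ scaledKrawtchouk z.1 z.2 k := by
  induction k using Nat.twoStepInduction with
  | zero => exact continuous_const
  | one => exact continuous_snd
  | more k ih ih' => simp only [scaledKrawtchouk]; fun_prop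

lemma scaledKrawtchouk_zero_left (x : ℝ) (k : ℕ) :
    scaledKrawtchouk 0 x k = (realHermite k).eval x := by
  induction k using Nat.twoStepInduction with
  | zero => simp [scaledKrawtchouk, realHermite_zero]
  | one => simp [scaledKrawtchouk, realHermite_one]
  | more k ih ih' => simp [scaledKrawtchouk, ih, ih', realHermite_succ_succ]

lemma scaledKrawtchouk_inv {m : ℕ} (hm : m ≠ 0) {x : Fin m → ℝ} (hx : ∀ i, x i ^ 2 = 1) (k : ℕ) :
    scaledKrawtchouk (m : ℝ)⁻¹ ((√m)⁻¹ * ∑ i, x i) k =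
      k.factorial / √m ^ k * eval x (esymm (Fin m) ℝ k) := by
  have hsq : √(m : ℝ) ^ 2 = m := Real.sq_sqrt m.cast_nonneg
  induction k using Nat.twoStepInduction with
  | zero => simp [scaledKrawtchouk]
  | one => simp [scaledKrawtchouk, esymm_one]
  | more k ih ih' =>
    have hrec := sum_mul_eval_esymm_succ x hx k
    rw [Fintype.card_fin] at hrec
    have hparam : 1 - k * (m : ℝ)⁻¹ = (m - k) / √m ^ 2 := by rw [hsq]; field_simp
    rw [scaledKrawtchouk, ih, ih', hparam, Nat.factorial_succ (k + 1), Nat.factorial_succ k]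
    push_cast
    linear_combination (k + 1) * k.factorial / √m ^ (k + 2) * hrec

lemma measurePreserving_infinitePi_fin {Ω : Type*} [MeasurableSpace Ω] (μ : Measure Ω)
    [IsProbabilityMeasure μ] (m : ℕ) :
    MeasurePreserving (fun (x : ℕ → Ω) (i : Fin m) ↦ x i) (Measure.infinitePi fun _ ↦ μ)
      (Measure.pi fun _ ↦ μ) where
  measurable := by fun_prop
  map_eq := by rw [Measure.map_infinitePi_infinitePi_of_inj Fin.val_injective,
    Measure.infinitePi_eq_pi]

lemma ae_infinitePi_rademacher_sq_eq_one :
    ∀ᵐ x ∂(Measure.infinitePi fun _ : ℕ ↦ rademacher), ∀ i, x i ^ 2 = 1 :=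
  ae_all_iff.2 fun i ↦ (measurePreserving_eval_infinitePi (fun _ : ℕ ↦ rademacher) i)
    |>.quasiMeasurePreserving.ae ae_rademacher_sq_eq_one

lemma isHypercontractiveSystem_scaledKrawtchouk {q : ℝ} (hq : 2 ≤ q) {m : ℕ} (hm : m ≠ 0) :
    IsHypercontractiveSystem (Measure.infinitePi fun _ : ℕ ↦ rademacher) q
      (fun k ↦ ENNReal.ofReal (q - 1) ^ k) fun k x ↦
        (√k.factorial)⁻¹ * scaledKrawtchouk (m : ℝ)⁻¹ ((√m)⁻¹ * ∑ i ∈ Finset.range m, x i) k := by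
  have hesymm := ((isHypercontractiveSystem_eval_esymm hq m).const_mul
    fun k ↦ √k.factorial / √m ^ k).comp_measurePreserving
      (measurePreserving_infinitePi_fin rademacher m)
      fun k ↦ (continuous_eval _).measurable.const_mul _
  refine (hesymm.mono (by linarith) fun k ↦ ?_).congr_ae fun k ↦ ?_
  · calc ‖√k.factorial / √m ^ k‖ₑ ^ 2 * (m.choose k * ENNReal.ofReal (q - 1) ^ k)
        = ENNReal.ofReal (k.factorial / m ^ k * m.choose k) * ENNReal.ofReal (q - 1) ^ k := by
          rw [Real.enorm_of_nonneg (by positivity), ← ENNReal.ofReal_pow (by positivity), div_pow,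
            ← pow_mul, mul_comm k, pow_mul, Real.sq_sqrt (by positivity),
            Real.sq_sqrt (by positivity), ENNReal.ofReal_mul (by positivity),
            ENNReal.ofReal_natCast, mul_assoc]
      _ ≤ ENNReal.ofReal (k.factorial / m ^ k * (m ^ k / k.factorial)) *
            ENNReal.ofReal (q - 1) ^ k := by
          gcongr
          exact Nat.choose_le_pow_div k m
      _ = ENNReal.ofReal (q - 1) ^ k := by
          rw [div_mul_div_cancel₀ (by positivity), div_self (by positivity), ENNReal.ofReal_one,
            one_mul]
  · filter_upwards [ae_infinitePi_rademacher_sq_eq_one] with x hx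
    rw [Finset.sum_range, scaledKrawtchouk_inv hm fun i ↦ hx i, ← mul_assoc, inv_mul_eq_div,
      div_right_comm, Real.div_sqrt]

lemma tendstoInDistribution_inv_sqrt_mul_sum_rademacher :
    TendstoInDistribution
      (fun (m : ℕ) (x : ℕ → ℝ) ↦ (√m)⁻¹ * ∑ i ∈ Finset.range m, x i) Filter.atTop id
      (fun _ ↦ Measure.infinitePi fun _ : ℕ ↦ rademacher) (gaussianReal 0 1) := by
  have hlaw (i : ℕ) := measurePreserving_eval_infinitePi (fun _ : ℕ ↦ rademacher) i
  refine tendstoInDistribution_inv_sqrt_mul_sum .id ?_ ?_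
    (iIndepFun_infinitePi fun _ ↦ measurable_id)
    fun i ↦ (hlaw i).hasLaw.identDistrib (hlaw 0).hasLaw
  · refine ((hlaw 0).hasLaw.integral_comp (f := id) (by fun_prop)).trans ?_
    simp [integral_rademacher]
  · refine ((hlaw 0).hasLaw.integral_comp (f := fun x ↦ x ^ 2) (by fun_prop)).trans ?_
    norm_num [integral_rademacher]

lemma lintegral_enorm_rpow_le_liminf {Ω Ω' : Type*} [MeasurableSpace Ω] [MeasurableSpace Ω']
    {P : Measure Ω} [IsProbabilityMeasure P] {P' : Measure Ω'} [IsProbabilityMeasure P']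
    {X : ℕ → Ω → ℝ} {Z : Ω' → ℝ} (h : TendstoInDistribution X Filter.atTop Z (fun _ ↦ P) P')
    {q : ℝ} (hq : 0 ≤ q) :
    ∫⁻ ω, ‖Z ω‖ₑ ^ q ∂P' ≤ Filter.liminf (fun m ↦ ∫⁻ ω, ‖X m ω‖ₑ ^ q ∂P) Filter.atTop := by
  have hfatou := lintegral_le_liminf_lintegral_of_forall_isOpen_measure_le_liminf_measure
    (f := fun x : ℝ ↦ |x| ^ q) (by fun_prop (disch := exact hq)) (fun x ↦ by positivity)
    fun G hG ↦ ProbabilityMeasure.le_liminf_measure_open_of_tendsto h.tendsto hG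
  have hreal (x : ℝ) : ENNReal.ofReal (|x| ^ q) = ‖x‖ₑ ^ q := by
    rw [Real.enorm_eq_ofReal_abs, ENNReal.ofReal_rpow_of_nonneg (abs_nonneg x) hq]
  simp only [ProbabilityMeasure.coe_mk, hreal] at hfatou
  rw [lintegral_map' (by fun_prop) h.aemeasurable_limit] at hfatou
  refine hfatou.trans_eq (congrArg (Filter.liminf · _) (funext fun m ↦ ?_))
  rw [lintegral_map' (by fun_prop) (h.forall_aemeasurable m)]

lemma isHypercontractiveSystem_hermiteFn {q : ℝ} (hq : 2 ≤ q) :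
    IsHypercontractiveSystem (gaussianReal 0 1) q (fun k ↦ ENNReal.ofReal (q - 1) ^ k)
      hermiteFn := by
  intro s c
  let F (z : ℝ × ℝ) : ℝ := ∑ k ∈ s, c k * ((√k.factorial)⁻¹ * scaledKrawtchouk z.2 z.1 k)
  have hlim := tendstoInDistribution_inv_sqrt_mul_sum_rademacher
    |>.continuous_comp_prodMk_of_tendstoInMeasure_const (g := F) (by fun_prop)
      (Y := fun (m : ℕ) _ ↦ (m : ℝ)⁻¹) (c := 0)
      (tendstoInMeasure_of_tendsto_ae (fun m ↦ aestronglyMeasurable_const)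
        (ae_of_all _ fun _ ↦ tendsto_inv_atTop_nhds_zero_nat)) fun m ↦ aemeasurable_const
  calc ∫⁻ x, ‖∑ k ∈ s, c k * hermiteFn k x‖ₑ ^ q ∂gaussianReal 0 1
      = ∫⁻ x, ‖F (x, 0)‖ₑ ^ q ∂gaussianReal 0 1 := by
        simp only [F, scaledKrawtchouk_zero_left, hermiteFn_eq, div_eq_inv_mul]
    _ ≤ _ := lintegral_enorm_rpow_le_liminf hlim (by linarith)
    _ ≤ (∑ k ∈ s, ENNReal.ofReal (q - 1) ^ k * ‖c k‖ₑ ^ 2) ^ (q / 2) := by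
        refine Filter.liminf_le_of_frequently_le' (Filter.Eventually.frequently ?_)
        filter_upwards [Filter.eventually_ne_atTop 0] with m hm
        exact isHypercontractiveSystem_scaledKrawtchouk hq hm s c

/-! ### Orthonormality of the Hermite functions -/

lemma integrable_eval_gaussianReal (p : Polynomial ℝ) :
    Integrable (fun x ↦ p.eval x) (gaussianReal 0 1) := by
  simp only [Polynomial.eval_eq_sum_range]
  refine integrable_finsetSum _ fun k _ ↦ Integrable.const_mul ?_ _
  rw [← integrable_norm_iff (by fun_prop)]
  simpa using (memLp_id_gaussianReal (μ := 0) (v := 1) k).integrable_norm_pow'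

lemma hasDerivAt_gaussianPDFReal_zero_one (x : ℝ) :
    HasDerivAt (gaussianPDFReal 0 1) (-(x * gaussianPDFReal 0 1 x)) x := by
  have hexponent : HasDerivAt (fun x : ℝ ↦ -x ^ 2 / 2) (-x) x := by
    refine ((hasDerivAt_pow 2 x).fun_neg.div_const 2).congr_deriv ?_
    push_cast
    ring
  have hpdf : gaussianPDFReal 0 1 = fun x ↦ (√(2 * Real.pi))⁻¹ * Real.exp (-x ^ 2 / 2) := by
    ext x
    simp [gaussianPDFReal]
  rw [hpdf]
  exact (hexponent.exp.const_mul _).congr_deriv (by ring)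

lemma integrable_gaussianPDFReal_mul_eval (p : Polynomial ℝ) :
    Integrable fun x ↦ gaussianPDFReal 0 1 x * p.eval x := by
  have hint := integrable_eval_gaussianReal p
  rw [gaussianReal_of_var_ne_zero 0 one_ne_zero,
    integrable_withDensity_iff_integrable_smul' (measurable_gaussianPDF _ _)
      (ae_of_all _ fun _ ↦ gaussianPDF_lt_top)] at hint
  simpa only [toReal_gaussianPDF, smul_eq_mul] using hint

lemma integral_X_mul_sub_derivative (p : Polynomial ℝ) :
    ∫ x, (Polynomial.X * p - Polynomial.derivative p).eval x ∂(gaussianReal 0 1) = 0 := by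
  rw [integral_gaussianReal_eq_integral_smul one_ne_zero, ← neg_eq_zero, ← integral_neg]
  simp only [smul_eq_mul]
  refine integral_eq_zero_of_hasDerivAt_of_integrable
    (f := fun x ↦ gaussianPDFReal 0 1 x * p.eval x) (fun x ↦ ?_)
    (integrable_gaussianPDFReal_mul_eval _).neg (integrable_gaussianPDFReal_mul_eval p)
  refine ((hasDerivAt_gaussianPDFReal_zero_one x).fun_mul (p.hasDerivAt x)).congr_deriv ?_
  simp only [Polynomial.eval_sub, Polynomial.eval_mul, Polynomial.eval_X]
  ring

lemma integral_realHermite_succ_mul (k : ℕ) (p : Polynomial ℝ) :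
    ∫ x, (realHermite (k + 1) * p).eval x ∂(gaussianReal 0 1) =
      ∫ x, (realHermite k * Polynomial.derivative p).eval x ∂(gaussianReal 0 1) := by
  have hparts := integral_X_mul_sub_derivative (realHermite k * p)
  have hsplit : Polynomial.X * (realHermite k * p) - Polynomial.derivative (realHermite k * p) =
      realHermite (k + 1) * p - realHermite k * Polynomial.derivative p := by
    rw [realHermite_succ, Polynomial.derivative_mul]
    ring
  simp only [hsplit, Polynomial.eval_sub] at hparts
  rwa [integral_sub (integrable_eval_gaussianReal _) (integrable_eval_gaussianReal _),
    sub_eq_zero] at hparts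

lemma integral_realHermite_mul (j k : ℕ) :
    ∫ x, (realHermite j * realHermite k).eval x ∂(gaussianReal 0 1) =
      if j = k then (k.factorial : ℝ) else 0 := by
  induction j generalizing k with
  | zero =>
    cases k with
    | zero => simp [realHermite_zero]
    | succ k =>
      rw [mul_comm, integral_realHermite_succ_mul, realHermite_zero]
      simp
  | succ j ih =>
    rw [integral_realHermite_succ_mul]
    cases k with
    | zero => simp [realHermite_zero]
    | succ k =>
      have hderiv (x : ℝ) :
          (realHermite j * Polynomial.derivative (realHermite (k + 1))).eval x =
            (k + 1) * (realHermite j * realHermite k).eval x := by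
        simp [derivative_realHermite_succ, mul_left_comm]
      simp only [hderiv, integral_const_mul, ih, add_left_inj, Nat.factorial_succ]
      split_ifs <;> simp

lemma hermiteFn_mul (j k : ℕ) (x : ℝ) :
    hermiteFn j x * hermiteFn k x =
      (realHermite j * realHermite k).eval x / (√j.factorial * √k.factorial) := by
  rw [hermiteFn_eq, hermiteFn_eq, div_mul_div_comm, Polynomial.eval_mul]

lemma integrable_hermiteFn_mul (j k : ℕ) :
    Integrable (fun x ↦ hermiteFn j x * hermiteFn k x) (gaussianReal 0 1) := by
  simp only [hermiteFn_mul]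
  exact (integrable_eval_gaussianReal _).div_const _

lemma integral_hermiteFn_mul (j k : ℕ) :
    ∫ x, hermiteFn j x * hermiteFn k x ∂(gaussianReal 0 1) = if j = k then 1 else 0 := by
  simp only [hermiteFn_mul, integral_div, integral_realHermite_mul]
  split_ifs with hjk
  · rw [hjk, Real.mul_self_sqrt (by positivity), div_self (by positivity)]
  · rw [zero_div]

instance (n : ℕ) : IsProbabilityMeasure (gaussianN n) := by
  unfold gaussianN
  infer_instance

lemma integrable_hermiteMv_mul {n : ℕ} (α β : Fin n → ℕ) :
    Integrable (fun x ↦ hermiteMv α x * hermiteMv β x) (gaussianN n) := by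
  simp only [hermiteMv, ← Finset.prod_mul_distrib]
  exact Integrable.fintype_prod_dep (f := fun i x ↦ hermiteFn (α i) x * hermiteFn (β i) x)
    fun i ↦ integrable_hermiteFn_mul (α i) (β i)

lemma integral_hermiteMv_mul {n : ℕ} (α β : Fin n → ℕ) :
    ∫ x, hermiteMv α x * hermiteMv β x ∂(gaussianN n) = if α = β then 1 else 0 := by
  simp only [hermiteMv, ← Finset.prod_mul_distrib, gaussianN]
  rw [integral_fintype_prod_eq_prod fun i x ↦ hermiteFn (α i) x * hermiteFn (β i) x]
  simp only [integral_hermiteFn_mul, Finset.prod_ite_zero, Finset.mem_univ, true_imp_iff,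
    funext_iff, Finset.prod_const_one]

lemma hermiteFn_zero (t : ℝ) : hermiteFn 0 t = 1 := by simp [hermiteFn_eq, realHermite_zero]

lemma hermiteMv_zero {n : ℕ} (x : Fin n → ℝ) : hermiteMv 0 x = 1 := by
  simp [hermiteMv, hermiteFn_zero]

lemma sqrt_succ_mul_hermiteFn_succ (k : ℕ) (t : ℝ) :
    √(k + 1) * hermiteFn (k + 1) t = (realHermite (k + 1)).eval t / √k.factorial := by
  rw [hermiteFn_eq, Nat.factorial_succ, Nat.cast_mul, Real.sqrt_mul (by positivity),
    Nat.cast_succ]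
  field_simp

lemma mul_hermiteFn (k : ℕ) (t : ℝ) :
    t * hermiteFn k t = √(k + 1) * hermiteFn (k + 1) t + √k * hermiteFn (k - 1) t := by
  rw [sqrt_succ_mul_hermiteFn_succ]
  cases k with
  | zero => simp [hermiteFn_eq, realHermite_zero, realHermite_one]
  | succ k =>
    have hfact : ((k + 1 : ℕ) : ℝ) / √(k + 1).factorial = √(k + 1 : ℕ) / √k.factorial := by
      rw [Nat.factorial_succ, Nat.cast_mul, Real.sqrt_mul (by positivity), div_mul_eq_div_div,
        Real.div_sqrt]
    simp only [hermiteFn_eq, realHermite_succ_succ, Nat.add_sub_cancel, Polynomial.eval_sub,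
      Polynomial.eval_mul, Polynomial.eval_X]
    have heval : (k + 1 : Polynomial ℝ).eval t = (k + 1 : ℕ) := by simp
    rw [heval]
    linear_combination (realHermite k).eval t * hfact

lemma hermiteMv_update {n : ℕ} (α : Fin n → ℕ) (i : Fin n) (k : ℕ) (x : Fin n → ℝ) :
    hermiteMv (Function.update α i k) x =
      hermiteFn k (x i) * ∏ j ∈ Finset.univ.erase i, hermiteFn (α j) (x j) := by
  rw [hermiteMv, ← Finset.mul_prod_erase _ _ (Finset.mem_univ i), Function.update_self]
  congr 1
  refine Finset.prod_congr rfl fun j hj ↦ ?_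
  rw [Function.update_of_ne (Finset.ne_of_mem_erase hj)]

lemma mul_hermiteMv {n : ℕ} (i : Fin n) (α : Fin n → ℕ) (x : Fin n → ℝ) :
    x i * hermiteMv α x =
      √(α i + 1) * hermiteMv (Function.update α i (α i + 1)) x +
        √(α i) * hermiteMv (Function.update α i (α i - 1)) x := by
  nth_rw 1 [← Function.update_eq_self i α]
  rw [hermiteMv_update, hermiteMv_update, hermiteMv_update, ← mul_assoc, mul_hermiteFn]
  ring

/-! ### Hermite expansion of polynomials -/

lemma eval_mem_span_hermiteMv {n : ℕ} (g : MvPolynomial (Fin n) ℝ) :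
    (fun x ↦ eval x g) ∈ Submodule.span ℝ (Set.range (hermiteMv (n := n))) := by
  set V := Submodule.span ℝ (Set.range (hermiteMv (n := n)))
  have hmem (α : Fin n → ℕ) : hermiteMv α ∈ V := Submodule.subset_span ⟨α, rfl⟩
  induction g using MvPolynomial.induction_on with
  | C a =>
    have hconst : (fun x ↦ eval x (C a)) = a • hermiteMv (0 : Fin n → ℕ) := by
      ext x
      simp [hermiteMv_zero]
    exact hconst ▸ V.smul_mem a (hmem 0)
  | add p q hp hq => exact (funext fun x ↦ map_add (eval x) p q) ▸ V.add_mem hp hq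
  | mul_X p i hp =>
    suffices hstable : V ≤ V.comap (LinearMap.mulLeft ℝ fun x ↦ x i) by
      have hmul : (fun x ↦ eval x (p * X i)) = (fun x ↦ x i) * fun x ↦ eval x p := by
        ext x
        simp [mul_comm]
      exact hmul ▸ hstable hp
    rw [Submodule.span_le]
    rintro _ ⟨α, rfl⟩
    have hmul : (fun x ↦ x i) * hermiteMv α =
        √(α i + 1) • hermiteMv (Function.update α i (α i + 1)) +
          √(α i) • hermiteMv (Function.update α i (α i - 1)) := funext (mul_hermiteMv i α)
    rw [SetLike.mem_coe, Submodule.mem_comap, LinearMap.mulLeft_apply, hmul]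
    exact V.add_mem (V.smul_mem _ (hmem _)) (V.smul_mem _ (hmem _))

lemma hermiteCoeff_eq_of_eval_eq_sum {n : ℕ} {g : MvPolynomial (Fin n) ℝ}
    {S : Finset (Fin n → ℕ)} {c : (Fin n → ℕ) → ℝ}
    (hg : ∀ x, eval x g = ∑ α ∈ S, c α * hermiteMv α x) (β : Fin n → ℕ) :
    hermiteCoeff g β = if β ∈ S then c β else 0 := by
  simp only [hermiteCoeff, hermiteCoeffF, hg, Finset.sum_mul, mul_assoc]
  rw [integral_finsetSum _ fun α _ ↦ (integrable_hermiteMv_mul α β).const_mul _]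
  simp [integral_const_mul, integral_hermiteMv_mul]

lemma integral_sq_sum_hermiteMv {n : ℕ} (S : Finset (Fin n → ℕ)) (c : (Fin n → ℕ) → ℝ) :
    ∫ x, (∑ α ∈ S, c α * hermiteMv α x) ^ 2 ∂(gaussianN n) = ∑ α ∈ S, c α ^ 2 := by
  have hint (α β : Fin n → ℕ) := (integrable_hermiteMv_mul α β).const_mul (c α * c β)
  simp only [sq, Finset.sum_mul_sum, mul_mul_mul_comm]
  rw [integral_finsetSum _ fun α _ ↦ integrable_finsetSum _ fun β _ ↦ hint α β]
  refine Finset.sum_congr rfl fun α hα ↦ ?_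
  rw [integral_finsetSum _ fun β _ ↦ hint α β]
  simp [integral_const_mul, integral_hermiteMv_mul, hα]

lemma exists_eval_eq_sum_hermiteMv {n : ℕ} (g : MvPolynomial (Fin n) ℝ) :
    ∃ (S : Finset (Fin n → ℕ)) (c : (Fin n → ℕ) → ℝ),
      ∀ x, eval x g = ∑ α ∈ S, c α * hermiteMv α x := by
  obtain ⟨c, hc⟩ := Finsupp.mem_span_range_iff_exists_finsupp.1 (eval_mem_span_hermiteMv g)
  refine ⟨c.support, c, fun x ↦ ?_⟩
  simpa [Finsupp.sum] using (congrFun hc x).symm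

lemma finite_support_hermiteCoeff {n : ℕ} (g : MvPolynomial (Fin n) ℝ) :
    (Function.support (hermiteCoeff g)).Finite := by
  obtain ⟨S, c, hg⟩ := exists_eval_eq_sum_hermiteMv g
  refine S.finite_toSet.subset fun α hα ↦ ?_
  by_contra hαS
  exact hα ((hermiteCoeff_eq_of_eval_eq_sum hg α).trans (if_neg hαS))

/-- The nonzero multi-indices occurring in the Hermite expansion of `g`. The index `0`, whose
coefficient is the mean of `g`, is left out, since the mean is always treated separately. -/
noncomputable def positiveHermiteSupport {n : ℕ} (g : MvPolynomial (Fin n) ℝ) :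
    Finset (Fin n → ℕ) :=
  (finite_support_hermiteCoeff g).toFinset.erase 0

lemma mem_positiveHermiteSupport {n : ℕ} {g : MvPolynomial (Fin n) ℝ} {α : Fin n → ℕ} :
    α ∈ positiveHermiteSupport g ↔ α ≠ 0 ∧ hermiteCoeff g α ≠ 0 := by
  simp [positiveHermiteSupport]

lemma hermiteCoeff_zero {n : ℕ} (g : MvPolynomial (Fin n) ℝ) :
    hermiteCoeff g 0 = ∫ x, eval x g ∂(gaussianN n) := by
  simp [hermiteCoeff, hermiteCoeffF, hermiteMv_zero]

lemma eval_eq_sum_insert_zero_hermiteMv {n : ℕ} (g : MvPolynomial (Fin n) ℝ) (x : Fin n → ℝ) :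
    eval x g =
      ∑ α ∈ insert 0 (positiveHermiteSupport g), hermiteCoeff g α * hermiteMv α x := by
  obtain ⟨S, c, hg⟩ := exists_eval_eq_sum_hermiteMv g
  have hcoeff := hermiteCoeff_eq_of_eval_eq_sum hg
  calc eval x g = ∑ α ∈ S, hermiteCoeff g α * hermiteMv α x := by
        rw [hg]
        exact Finset.sum_congr rfl fun α hα ↦ by rw [hcoeff, if_pos hα]
    _ = ∑ α ∈ S ∪ insert 0 (positiveHermiteSupport g), hermiteCoeff g α * hermiteMv α x := by
        refine Finset.sum_subset Finset.subset_union_left fun α _ hα ↦ ?_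
        rw [hcoeff, if_neg hα, zero_mul]
    _ = _ := by
        refine (Finset.sum_subset Finset.subset_union_right fun α _ hα ↦ ?_).symm
        have hα0 : hermiteCoeff g α = 0 := by
          simp only [Finset.mem_insert, mem_positiveHermiteSupport] at hα
          tauto
        rw [hα0, zero_mul]

lemma eval_sub_integral_eq_sum_hermiteMv {n : ℕ} (g : MvPolynomial (Fin n) ℝ) (x : Fin n → ℝ) :
    eval x g - ∫ y, eval y g ∂(gaussianN n) =
      ∑ α ∈ positiveHermiteSupport g, hermiteCoeff g α * hermiteMv α x := by
  rw [eval_eq_sum_insert_zero_hermiteMv,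
    Finset.sum_insert (by simp [mem_positiveHermiteSupport]), hermiteMv_zero, mul_one,
    hermiteCoeff_zero, add_sub_cancel_left]

lemma one_le_sum_iff_ne_zero {ι : Type*} [Fintype ι] {α : ι → ℕ} : 1 ≤ ∑ i, α i ↔ α ≠ 0 := by
  simp [Nat.one_le_iff_ne_zero, funext_iff]

lemma hyperVar_eq_sum {n : ℕ} (R : ℝ) (g : MvPolynomial (Fin n) ℝ) :
    hyperVar R g =
      ∑ α ∈ positiveHermiteSupport g, R ^ (2 * ∑ i, α i) * hermiteCoeff g α ^ 2 := by
  simp only [hyperVar, hyperVarGE, one_le_sum_iff_ne_zero]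
  rw [tsum_eq_sum (s := positiveHermiteSupport g) fun α hα ↦ ?_]
  · exact Finset.sum_congr rfl fun α hα ↦ if_pos (mem_positiveHermiteSupport.1 hα).1
  · rw [mem_positiveHermiteSupport, not_and_not_right] at hα
    split_ifs with hα0
    · rw [hα hα0, zero_pow two_ne_zero, mul_zero]
    · rfl

lemma norm2sq_eq_sq_integral_add_hyperVar_one {n : ℕ} (g : MvPolynomial (Fin n) ℝ) :
    norm2sq g = (∫ x, eval x g ∂(gaussianN n)) ^ 2 + hyperVar 1 g := by
  rw [← hermiteCoeff_zero]
  simp only [norm2sq, eval_eq_sum_insert_zero_hermiteMv g]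
  rw [integral_sq_sum_hermiteMv, Finset.sum_insert (by simp [mem_positiveHermiteSupport])]
  simp [hyperVar_eq_sum]

/-! ### Gaussian hypercontractivity for polynomials -/

lemma isHypercontractiveSystem_hermiteMv {q : ℝ} (hq : 2 ≤ q) (n : ℕ) :
    IsHypercontractiveSystem (gaussianN n) q
      (fun α : Fin n → ℕ ↦ ENNReal.ofReal (q - 1) ^ ∑ i, α i) hermiteMv := by
  have hpi := IsHypercontractiveSystem.pi (n := n) hq (fun _ ↦ measurable_hermiteFn)
    fun _ ↦ isHypercontractiveSystem_hermiteFn hq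
  simp only [Finset.prod_pow_eq_pow_sum] at hpi
  exact hpi

lemma integral_abs_rpow_rpow_inv_le_sqrt {Ω : Type*} [MeasurableSpace Ω] {ν : Measure Ω}
    {f : Ω → ℝ} (hf : AEStronglyMeasurable f ν) {q B : ℝ} (hq : 0 < q) (hB : 0 ≤ B)
    (h : ∫⁻ x, ‖f x‖ₑ ^ q ∂ν ≤ ENNReal.ofReal B ^ (q / 2)) :
    (∫ x, |f x| ^ q ∂ν) ^ (1 / q) ≤ √B := by
  have hint : ∫ x, |f x| ^ q ∂ν ≤ B ^ (q / 2) := by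
    rw [integral_eq_lintegral_of_nonneg_ae (ae_of_all _ fun x ↦ by positivity)
      (hf.aemeasurable.abs.pow_const q).aestronglyMeasurable]
    refine ENNReal.toReal_le_of_le_ofReal (by positivity) ?_
    simpa only [Real.enorm_eq_ofReal_abs, ENNReal.ofReal_rpow_of_nonneg (abs_nonneg _) hq.le,
      ENNReal.ofReal_rpow_of_nonneg hB (by positivity : 0 ≤ q / 2)] using h
  calc (∫ x, |f x| ^ q ∂ν) ^ (1 / q) ≤ (B ^ (q / 2)) ^ (1 / q) := by gcongr
    _ = √B := by
      rw [← Real.rpow_mul hB, Real.sqrt_eq_rpow]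
      congr 1
      field_simp

lemma hyperVar_nonneg {n : ℕ} (R : ℝ) (g : MvPolynomial (Fin n) ℝ) : 0 ≤ hyperVar R g := by
  rw [hyperVar_eq_sum]
  exact Finset.sum_nonneg fun α _ ↦ mul_nonneg ((even_two_mul _).pow_nonneg R) (sq_nonneg _)

lemma integral_abs_eval_sub_integral_rpow_le_sqrt_hyperVar {n : ℕ} {ρ : ℝ} (hρ : 1 ≤ ρ ^ 2)
    (g : MvPolynomial (Fin n) ℝ) :
    (∫ x, |eval x g - ∫ y, eval y g ∂(gaussianN n)| ^ (1 + ρ ^ 2) ∂(gaussianN n)) ^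
        (1 / (1 + ρ ^ 2)) ≤ √(hyperVar ρ g) := by
  refine integral_abs_rpow_rpow_inv_le_sqrt
    (f := fun x ↦ eval x g - ∫ y, eval y g ∂(gaussianN n))
    ((continuous_eval g).sub continuous_const).aestronglyMeasurable (by positivity)
    (hyperVar_nonneg ρ g) ?_
  simp only [eval_sub_integral_eq_sum_hermiteMv]
  refine (isHypercontractiveSystem_hermiteMv (by linarith) n _ _).trans_eq (congrArg (· ^ _) ?_)
  rw [hyperVar_eq_sum, ENNReal.ofReal_sum_of_nonneg fun α _ ↦
    mul_nonneg ((even_two_mul _).pow_nonneg ρ) (sq_nonneg _)]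
  refine Finset.sum_congr rfl fun α _ ↦ ?_
  rw [add_sub_cancel_left, pow_mul, ENNReal.ofReal_mul (by positivity),
    ENNReal.ofReal_pow (sq_nonneg ρ), ← sq_abs (hermiteCoeff g α),
    ENNReal.ofReal_pow (abs_nonneg _), Real.enorm_eq_ofReal_abs]

lemma sq_mul_hyperVar_le {n : ℕ} {t ρ R : ℝ} (ht : 1 ≤ t) (hρ : 0 ≤ ρ) (hR : t * ρ ≤ R)
    (g : MvPolynomial (Fin n) ℝ) : t ^ 2 * hyperVar ρ g ≤ hyperVar R g := by
  rw [hyperVar_eq_sum, hyperVar_eq_sum, Finset.mul_sum]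
  simp only [← mul_assoc]
  refine Finset.sum_le_sum fun α hα ↦ mul_le_mul_of_nonneg_right ?_ (sq_nonneg _)
  have hdegree : 1 ≤ ∑ i, α i := one_le_sum_iff_ne_zero.2 (mem_positiveHermiteSupport.1 hα).1
  calc t ^ 2 * ρ ^ (2 * ∑ i, α i)
      ≤ t ^ (2 * ∑ i, α i) * ρ ^ (2 * ∑ i, α i) := by
        gcongr
        omega
    _ ≤ R ^ (2 * ∑ i, α i) := by
        rw [← mul_pow]
        gcongr

/-- Attenuated polynomials are hyperconcentrated: if `g` is `(R,θ)`-attenuated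
(`HyperVar_R[g] ≤ θ·‖g‖₂²`) with `R ≥ √2` and `0 ≤ θ ≤ 1`, then with
`μ = E_{x ∼ N(0,1)^n}[g(x)]` and `q = 1 + R²/2`,
`(E[|g(x) - μ|^q])^{1/q} ≤ √θ·|μ|`. -/
theorem attenuated_implies_hyperconcentrated (n : ℕ) (g : MvPolynomial (Fin n) ℝ)
    (R θ : ℝ) (hR : Real.sqrt 2 ≤ R) (hθ0 : 0 ≤ θ) (hθ1 : θ ≤ 1)
    (hatt : hyperVar R g ≤ θ * norm2sq g) :
    (∫ x, |eval x g - ∫ y, eval y g ∂(gaussianN n)| ^ (1 + R ^ 2 / 2) ∂(gaussianN n)) ^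
        (1 / (1 + R ^ 2 / 2)) ≤
      Real.sqrt θ * |∫ x, eval x g ∂(gaussianN n)| := by
  set μ := ∫ x, eval x g ∂(gaussianN n)
  have h_sqrt_two : 0 < √2 := by positivity
  have hscale : √2 * (R / √2) = R := mul_div_cancel₀ R h_sqrt_two.ne'
  have hρ : 1 ≤ R / √2 := (one_le_div h_sqrt_two).2 hR
  have hexponent : R ^ 2 / 2 = (R / √2) ^ 2 := by rw [div_pow, Real.sq_sqrt zero_le_two]
  have hlevel := sq_mul_hyperVar_le Real.one_lt_sqrt_two.le (by linarith) hscale.le g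
  have hvariance := sq_mul_hyperVar_le Real.one_lt_sqrt_two.le zero_le_one (by simpa using hR) g
  rw [Real.sq_sqrt zero_le_two] at hlevel hvariance
  have hparseval : norm2sq g = μ ^ 2 + hyperVar 1 g := norm2sq_eq_sq_integral_add_hyperVar_one g
  have hnorm : θ * norm2sq g ≤ norm2sq g :=
    mul_le_of_le_one_left (integral_nonneg fun x ↦ sq_nonneg _) hθ1
  have hmean : θ * norm2sq g ≤ θ * (2 * μ ^ 2) := by gcongr; linarith
  rw [hexponent]
  calc _ ≤ √(hyperVar (R / √2) g) :=
        integral_abs_eval_sub_integral_rpow_le_sqrt_hyperVar (one_le_pow₀ hρ) g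
    _ ≤ √(θ * μ ^ 2) := Real.sqrt_le_sqrt (by linarith)
    _ = √θ * |μ| := by rw [Real.sqrt_mul hθ0, Real.sqrt_sq_eq_abs]
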